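/- (Positivstellensatz for linear polynomials on spectrahedra.) Let L be a linear pencil of size m in n variables and f ∈ ℝ[X₁,…,Xₙ]₁ a linear polynomial. Then f ≥ 0 on S_L if and only if there exist linear polynomials ℓ₁,…,ℓₙ ∈ ℝ[X₁,…,Xₙ]₁, quadratic sos-matrices S₁,…,Sₙ ∈ ℝ[X₁,…,Xₙ]^(m×m), a positive semidefinite constant matrix S ∈ ℝ^(m×m), and c ≥ 0 such that: ℓᵢ² + tr(L·Sᵢ) lies in the ideal of ℝ[X₁,…,Xₙ] generated by ℓ₁,…,ℓ_{i−1} for each i ∈ {1,…,n}, and f − c − tr(L·S) lies in the ideal generated by ℓ₁,…,ℓₙ. -/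

import Mathlib

open MvPolynomial Matrix

/-- The linear pencil `L = A 0 + X 1 * A 1 + ... + X n * A n` as a symmetric matrix
with entries in the polynomial ring `ℝ[X 1, ..., X n]`. -/
noncomputable def pencilPoly {n m : ℕ} (A : Fin (n+1) → Matrix (Fin m) (Fin m) ℝ) :
    Matrix (Fin m) (Fin m) (MvPolynomial (Fin n) ℝ) :=
  fun a b => MvPolynomial.C (A 0 a b) + ∑ i : Fin n, MvPolynomial.X i * MvPolynomial.C (A i.succ a b)

/-- Evaluation of the pencil at a point `x ∈ ℝⁿ`. -/
def pencilEval {n m : ℕ} (A : Fin (n+1) → Matrix (Fin m) (Fin m) ℝ) (x : Fin n → ℝ) :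
    Matrix (Fin m) (Fin m) ℝ :=
  A 0 + ∑ i : Fin n, x i • A i.succ

/-- The spectrahedron `S_L = {x ∈ ℝⁿ ∣ L(x) ⪰ 0}`. -/
def specSet {n m : ℕ} (A : Fin (n+1) → Matrix (Fin m) (Fin m) ℝ) : Set (Fin n → ℝ) :=
  {x | (pencilEval A x).PosSemidef}

/-- `vᵀ L v` for a vector `v` of polynomials. -/
noncomputable def vLv {n m : ℕ} (A : Fin (n+1) → Matrix (Fin m) (Fin m) ℝ)
    (v : Fin m → MvPolynomial (Fin n) ℝ) : MvPolynomial (Fin n) ℝ :=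
  ∑ a : Fin m, ∑ b : Fin m, v a * pencilPoly A a b * v b

/-- Membership in the quadratic module `M_L` associated to the pencil `L`:
`p = s + Σⱼ vⱼᵀ L vⱼ` with `s` a sum of squares. -/
def memQM {n m : ℕ} (A : Fin (n+1) → Matrix (Fin m) (Fin m) ℝ)
    (p : MvPolynomial (Fin n) ℝ) : Prop :=
  ∃ (k r : ℕ) (q : Fin k → MvPolynomial (Fin n) ℝ)
    (v : Fin r → Fin m → MvPolynomial (Fin n) ℝ),
    p = ∑ i, (q i)^2 + ∑ j, vLv A (v j)

/-- An sos-matrix: a matrix polynomial of the form `Pᵀ P`. -/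
def IsSosMatrix {n m : ℕ} (S : Matrix (Fin m) (Fin m) (MvPolynomial (Fin n) ℝ)) : Prop :=
  ∃ (s : ℕ) (P : Matrix (Fin s) (Fin m) (MvPolynomial (Fin n) ℝ)), S = Pᵀ * P

/-- The polynomial of degree at most one with coefficient vector `v`; the entry `v 0` is the
constant coefficient. -/
noncomputable def affPoly {n : ℕ} : (Fin (n + 1) → ℝ) →ₗ[ℝ] MvPolynomial (Fin n) ℝ where
  toFun v := C (v 0) + ∑ i : Fin n, X i * C (v i.succ)
  map_add' v w := by
    simp only [Pi.add_apply, map_add, mul_add, Finset.sum_add_distrib]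
    ring
  map_smul' r v := by
    simp only [Pi.smul_apply, smul_eq_mul, map_mul, RingHom.id_apply, smul_eq_C_mul, mul_add,
      Finset.mul_sum, mul_left_comm]

lemma pencilPoly_apply {n m : ℕ} (A : Fin (n + 1) → Matrix (Fin m) (Fin m) ℝ) (a b : Fin m) :
    pencilPoly A a b = affPoly fun i => A i a b := rfl

lemma affPoly_single_zero {n : ℕ} (c : ℝ) :
    affPoly (Pi.single 0 c : Fin (n + 1) → ℝ) = C c := by
  simp [affPoly]

lemma totalDegree_affPoly_le {n : ℕ} (v : Fin (n + 1) → ℝ) : (affPoly v).totalDegree ≤ 1 := by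
  refine (totalDegree_add _ _).trans (max_le (by simp) ?_)
  refine (totalDegree_finsetSum _ _).trans (Finset.sup_le fun i _ => ?_)
  exact (totalDegree_mul _ _).trans (by simp)

lemma exists_affPoly_eq {n : ℕ} (f : MvPolynomial (Fin n) ℝ) (hf : f.totalDegree ≤ 1) :
    ∃ v, affPoly v = f := by
  refine ⟨Fin.cons (coeff 0 f) fun i => coeff (Finsupp.single i 1) f, ?_⟩
  ext d
  have hsum : ∀ i : Fin n, coeff d (X i * C (coeff (Finsupp.single i 1) f)) =
      if Finsupp.single i 1 = d then coeff (Finsupp.single i 1) f else 0 := fun i => by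
    rw [mul_comm, coeff_C_mul, coeff_X]
    split_ifs <;> simp
  simp only [affPoly, LinearMap.coe_mk, AddHom.coe_mk, Fin.cons_zero, Fin.cons_succ, coeff_add,
    coeff_sum, hsum, coeff_C]
  rcases Nat.lt_trichotomy d.degree 1 with h | h | h
  · obtain rfl : d = 0 := (Finsupp.degree_eq_zero_iff d).1 (by omega)
    simp
  · obtain ⟨i, rfl⟩ := (Finsupp.sum_eq_one_iff d).1 h
    have h0 : (0 : Fin n →₀ ℕ) ≠ Finsupp.single i 1 := by
      intro h'; simpa using congrArg (fun e => e i) h'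
    rw [if_neg h0, Finset.sum_eq_single i]
    · simp
    · intro j _ hj
      rw [if_neg]
      intro h'
      exact hj ((Finsupp.single_left_inj one_ne_zero).1 h')
    · simp
  · have hc : coeff d f = 0 := by
      by_contra hne
      have := le_totalDegree (mem_support_iff.2 hne)
      simp only [Finsupp.degree_apply, Finsupp.sum] at *
      omega
    rw [hc, if_neg, Finset.sum_eq_zero, add_zero]
    · intro i _
      rw [if_neg]
      rintro rfl
      simp at h
    · rintro rfl
      simp at h

/-- Coefficient vector of the affine function `x ↦ vᵀ L(x) w`. -/
def pencilForm {n m : ℕ} (A : Fin (n + 1) → Matrix (Fin m) (Fin m) ℝ) (v w : Fin m → ℝ) :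
    Fin (n + 1) → ℝ :=
  fun i => v ⬝ᵥ A i *ᵥ w

/-- Coefficient vector of the affine function `x ↦ tr (L(x) S)`. -/
def pencilTrace {n m : ℕ} (A : Fin (n + 1) → Matrix (Fin m) (Fin m) ℝ) :
    Matrix (Fin m) (Fin m) ℝ →ₗ[ℝ] Fin (n + 1) → ℝ where
  toFun S i := (A i * S).trace
  map_add' S T := by ext i; simp [mul_add]
  map_smul' r S := by ext i; simp

section pencil

variable {n m : ℕ} {A : Fin (n + 1) → Matrix (Fin m) (Fin m) ℝ}

lemma pencilForm_add_right (u v w : Fin m → ℝ) :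
    pencilForm A u (v + w) = pencilForm A u v + pencilForm A u w := by
  ext i; simp [pencilForm, mulVec_add]

lemma pencilForm_smul_right (r : ℝ) (u v : Fin m → ℝ) :
    pencilForm A u (r • v) = r • pencilForm A u v := by
  ext i; simp [pencilForm, mulVec_smul]

lemma pencilForm_comm (hA : ∀ i, (A i).IsSymm) (u v : Fin m → ℝ) :
    pencilForm A u v = pencilForm A v u := by
  ext i
  simp only [pencilForm]
  rw [dotProduct_mulVec, dotProduct_comm, ← mulVec_transpose, (hA i).eq]

lemma pencilTrace_vecMulVec (u : Fin m → ℝ) :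
    pencilTrace A (vecMulVec u u) = pencilForm A u u := by
  ext i
  simp only [pencilTrace, LinearMap.coe_mk, AddHom.coe_mk, pencilForm]
  rw [mul_vecMulVec, trace_vecMulVec, dotProduct_comm]

lemma affPoly_pencilForm (v w : Fin m → ℝ) :
    affPoly (pencilForm A v w) = (C ∘ v) ⬝ᵥ pencilPoly A *ᵥ (C ∘ w) := by
  have h : pencilForm A v w = ∑ a, ∑ b, (v a * w b) • fun i => A i a b := by
    ext i
    simp only [pencilForm, dotProduct, mulVec, Finset.sum_apply, Pi.smul_apply, smul_eq_mul,
      Finset.mul_sum]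
    exact Finset.sum_congr rfl fun a _ => Finset.sum_congr rfl fun b _ => by ring
  simp only [h, map_sum, map_smul, dotProduct, mulVec, Function.comp_apply, Finset.mul_sum,
    pencilPoly_apply, smul_eq_C_mul, map_mul]
  exact Finset.sum_congr rfl fun a _ => Finset.sum_congr rfl fun b _ => by ring

lemma affPoly_pencilTrace (S : Matrix (Fin m) (Fin m) ℝ) :
    affPoly (pencilTrace A S) = (pencilPoly A * S.map C).trace := by
  have h : pencilTrace A S = ∑ a, ∑ b, S b a • fun i => A i a b := by
    ext i
    simp only [pencilTrace, LinearMap.coe_mk, AddHom.coe_mk, trace, diag_apply, mul_apply,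
      Finset.sum_apply, Pi.smul_apply, smul_eq_mul, mul_comm]
  simp only [h, map_sum, map_smul, trace, diag_apply, mul_apply, pencilPoly_apply, smul_eq_C_mul,
    Matrix.map_apply, mul_comm]

lemma trace_pencilPoly_mul_transpose_mul_self {s : ℕ}
    (P : Fin s → Fin m → MvPolynomial (Fin n) ℝ) :
    (pencilPoly A * ((of P)ᵀ * of P)).trace = ∑ j, P j ⬝ᵥ pencilPoly A *ᵥ P j := by
  rw [← Matrix.mul_assoc, trace_mul_comm, ← Matrix.mul_assoc]
  simp only [trace, diag_apply, mul_apply, dotProduct, mulVec, transpose_apply, of_apply,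
    Finset.mul_sum, Finset.sum_mul, mul_assoc]
  exact Finset.sum_congr rfl fun j _ => Finset.sum_comm

lemma eval_pencilPoly (x : Fin n → ℝ) : (pencilPoly A).map (eval x) = pencilEval A x := by
  ext a b
  simp [pencilPoly, pencilEval, Matrix.sum_apply]

lemma eval_affPoly_pencilForm (x : Fin n → ℝ) (u : Fin m → ℝ) :
    eval x (affPoly (pencilForm A u u)) = u ⬝ᵥ pencilEval A x *ᵥ u := by
  rw [← eval_pencilPoly, affPoly_pencilForm]
  simp [dotProduct, mulVec]

lemma isSymm_pencilEval (hA : ∀ i, (A i).IsSymm) (x : Fin n → ℝ) :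
    (pencilEval A x).IsSymm := by
  simp only [Matrix.IsSymm, pencilEval, transpose_add, transpose_sum, transpose_smul, (hA _).eq]

lemma totalDegree_transpose_mul_self_le {s : ℕ}
    {P : Matrix (Fin s) (Fin m) (MvPolynomial (Fin n) ℝ)} (hP : ∀ j a, (P j a).totalDegree ≤ 1)
    (a b : Fin m) : ((Pᵀ * P) a b).totalDegree ≤ 2 := by
  rw [mul_apply]
  refine (totalDegree_finsetSum _ _).trans (Finset.sup_le fun j _ => ?_)
  exact (totalDegree_mul _ _).trans (add_le_add (hP j a) (hP j b))

lemma exists_eq_sum_vecMulVec {S : Matrix (Fin m) (Fin m) ℝ} (hS : S.PosSemidef) :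
    ∃ (s : ℕ) (v : Fin s → Fin m → ℝ), S = ∑ j, vecMulVec (v j) (v j) := by
  simpa using posSemidef_iff_eq_sum_vecMulVec.1 hS

end pencil

section certificate

variable {n m : ℕ} {A : Fin (n + 1) → Matrix (Fin m) (Fin m) ℝ}
  {U : Submodule ℝ (Fin (n + 1) → ℝ)}

/-- The affine function `ℓ` vanishes on the spectrahedron, modulo the affine functions in `U`,
as certified by a quadratic sos-matrix. -/
def HasSosCertificate (A : Fin (n + 1) → Matrix (Fin m) (Fin m) ℝ)
    (U : Submodule ℝ (Fin (n + 1) → ℝ)) (ℓ : Fin (n + 1) → ℝ) : Prop :=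
  ∃ S : Matrix (Fin m) (Fin m) (MvPolynomial (Fin n) ℝ), IsSosMatrix S ∧
    (∀ a b, (S a b).totalDegree ≤ 2) ∧
    affPoly ℓ ^ 2 + (pencilPoly A * S).trace ∈ Ideal.span (affPoly '' (U : Set (Fin (n + 1) → ℝ)))

lemma affPoly_mem_span {v : Fin (n + 1) → ℝ} (hv : v ∈ U) :
    affPoly v ∈ Ideal.span (affPoly '' (U : Set (Fin (n + 1) → ℝ))) :=
  Ideal.subset_span ⟨v, hv, rfl⟩

lemma hasSosCertificate_of_rows {s : ℕ} (P : Fin s → Fin m → MvPolynomial (Fin n) ℝ)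
    (hP : ∀ j a, (P j a).totalDegree ≤ 1) {ℓ : Fin (n + 1) → ℝ}
    (h : affPoly ℓ ^ 2 + ∑ j, P j ⬝ᵥ pencilPoly A *ᵥ P j ∈
      Ideal.span (affPoly '' (U : Set (Fin (n + 1) → ℝ)))) :
    HasSosCertificate A U ℓ :=
  ⟨(of P)ᵀ * of P, ⟨s, of P, rfl⟩, totalDegree_transpose_mul_self_le hP, by
    rwa [trace_pencilPoly_mul_transpose_mul_self]⟩

lemma smul_dotProduct_pencilPoly_mulVec_smul (d : MvPolynomial (Fin n) ℝ) (u : Fin m → ℝ) :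
    (d • (C ∘ u)) ⬝ᵥ pencilPoly A *ᵥ (d • (C ∘ u)) = d ^ 2 * affPoly (pencilForm A u u) := by
  rw [mulVec_smul, smul_dotProduct, dotProduct_smul, affPoly_pencilForm]
  simp only [smul_eq_mul]
  ring

lemma totalDegree_affPoly_smul_le (v : Fin (n + 1) → ℝ) (u : Fin m → ℝ) (a : Fin m) :
    ((affPoly v • (C ∘ u : Fin m → MvPolynomial (Fin n) ℝ)) a).totalDegree ≤ 1 :=
  (totalDegree_mul _ _).trans (by simpa using totalDegree_affPoly_le v)

/-- A weighted sum of the rank one constraints `uⱼᵀ L uⱼ` with weights squares of affine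
functions. -/
lemma hasSosCertificate_of_weights {s : ℕ} (d : Fin s → Fin (n + 1) → ℝ) (u : Fin s → Fin m → ℝ)
    {ℓ : Fin (n + 1) → ℝ}
    (h : affPoly ℓ ^ 2 + ∑ j, affPoly (d j) ^ 2 * affPoly (pencilForm A (u j) (u j)) ∈
      Ideal.span (affPoly '' (U : Set (Fin (n + 1) → ℝ)))) :
    HasSosCertificate A U ℓ := by
  refine hasSosCertificate_of_rows (fun j => affPoly (d j) • (C ∘ u j))
    (fun j => totalDegree_affPoly_smul_le _ _) ?_
  simpa only [smul_dotProduct_pencilPoly_mulVec_smul] using h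

/-- The constant one has a certificate if `-c` is of the form `tr (L S)` modulo `U` for some
`c > 0` and positive semidefinite `S`. -/
lemma hasSosCertificate_single_zero_one {c : ℝ} (hc : 0 < c) {s : ℕ} (u : Fin s → Fin m → ℝ)
    (h : Pi.single 0 c + ∑ j, pencilForm A (u j) (u j) ∈ U) :
    HasSosCertificate A U (Pi.single 0 1) := by
  refine hasSosCertificate_of_weights (fun _ => Pi.single 0 (√c)⁻¹) u ?_
  have hs : (√c)⁻¹ ^ 2 = c⁻¹ := by rw [inv_pow, Real.sq_sqrt hc.le]
  have hC : (C c⁻¹ : MvPolynomial (Fin n) ℝ) * C c = 1 := by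
    rw [← C_mul, inv_mul_cancel₀ hc.ne', C_1]
  convert Ideal.mul_mem_left _ (C c⁻¹) (affPoly_mem_span h) using 1
  simp only [affPoly_single_zero, map_add, map_sum, ← C_pow, hs, mul_add, hC, Finset.mul_sum]
  simp

/-- If the sum of the `uⱼᵀ L uⱼ` vanishes modulo `U`, then each summand has a certificate. -/
lemma hasSosCertificate_summand {s : ℕ} (u : Fin s → Fin m → ℝ)
    (h : ∑ j, pencilForm A (u j) (u j) ∈ U) (k : Fin s) :
    HasSosCertificate A U (pencilForm A (u k) (u k)) := by
  set p := pencilForm A (u k) (u k) with hp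
  refine hasSosCertificate_of_weights (fun j => if j = k then (2⁻¹ : ℝ) • (Pi.single 0 1 - p)
    else (2⁻¹ : ℝ) • (Pi.single 0 1 + p)) u ?_
  refine (congrArg (· ∈ _) ?_).mpr (Ideal.mul_mem_left _
    ((affPoly ((2⁻¹ : ℝ) • (Pi.single 0 1 + p))) ^ 2) (affPoly_mem_span h))
  rw [map_sum, Finset.mul_sum, ← Finset.add_sum_erase _ _ (Finset.mem_univ k),
    ← Finset.add_sum_erase _ _ (Finset.mem_univ k), ← add_assoc]
  refine congrArg₂ (· + ·) ?_ ?_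
  · rw [if_pos rfl, ← hp]
    have h4 : (C (4⁻¹ : ℝ) : MvPolynomial (Fin n) ℝ) * 4 = 1 := by
      rw [show (4 : MvPolynomial (Fin n) ℝ) = C 4 from (map_ofNat C 4).symm, ← C_mul]; norm_num
    have h2 : (C (2⁻¹ : ℝ) : MvPolynomial (Fin n) ℝ) ^ 2 = C 4⁻¹ := by
      rw [← C_pow]; norm_num
    simp only [map_smul, map_add, map_sub, affPoly_single_zero, smul_eq_C_mul, mul_pow, h2, C_1]
    linear_combination (-(affPoly p) ^ 2) * h4
  · exact Finset.sum_congr rfl fun j hj => by rw [if_neg (Finset.ne_of_mem_erase hj)]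

/-- If `uᵀ L u` vanishes modulo `U`, then each `vᵀ L u` has a certificate. -/
lemma hasSosCertificate_of_isotropic (hA : ∀ i, (A i).IsSymm) {u : Fin m → ℝ}
    (h : pencilForm A u u ∈ U) (v : Fin m → ℝ) :
    HasSosCertificate A U (pencilForm A v u) := by
  set p := pencilForm A v u with hp
  set q := (-2⁻¹ : ℝ) • (pencilForm A v v + Pi.single 0 1) with hq
  refine hasSosCertificate_of_rows
    (fun _ : Fin 1 => affPoly p • (C ∘ v) + affPoly q • (C ∘ u)) (fun _ a => ?_) ?_
  · exact (totalDegree_add _ _).trans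
      (max_le (totalDegree_affPoly_smul_le p v a) (totalDegree_affPoly_smul_le q u a))
  · convert Ideal.mul_mem_left _ (affPoly q ^ 2) (affPoly_mem_span h) using 1
    have h2 : (C (2⁻¹ : ℝ) : MvPolynomial (Fin n) ℝ) * 2 = 1 := by
      rw [show (2 : MvPolynomial (Fin n) ℝ) = C 2 from (map_ofNat C 2).symm, ← C_mul]; norm_num
    have hq' : affPoly q = -(C 2⁻¹ * (affPoly (pencilForm A v v) + 1)) := by
      rw [hq, map_smul, map_add, affPoly_single_zero, smul_eq_C_mul, C_neg, C_1]; ring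
    simp only [Finset.univ_unique, Finset.sum_singleton, mulVec_add, mulVec_smul, add_dotProduct,
      dotProduct_add, smul_dotProduct, dotProduct_smul, ← affPoly_pencilForm,
      pencilForm_comm hA u v, ← hp, smul_eq_mul]
    linear_combination 2 * affPoly p ^ 2 * hq' -
      affPoly p ^ 2 * (affPoly (pencilForm A v v) + 1) * h2

end certificate

section separation

lemma isClosed_image_of_ker_inter_eq_zero {E F : Type*} [NormedAddCommGroup E] [NormedSpace ℝ E]
    [FiniteDimensional ℝ E] [NormedAddCommGroup F] [NormedSpace ℝ F] (K : PointedCone ℝ E)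
    (hK : IsClosed (K : Set E)) (T : E →ₗ[ℝ] F) (hT : ∀ x ∈ K, T x = 0 → x = 0) :
    IsClosed (T '' (K : Set E)) := by
  have : ProperSpace E := FiniteDimensional.proper_real E
  have hTc : Continuous T := T.continuous_of_finiteDimensional
  obtain ⟨ε, hε, hle⟩ : ∃ ε > 0, ∀ x ∈ K, ε * ‖x‖ ≤ ‖T x‖ := by
    have hc : IsCompact ((K : Set E) ∩ Metric.sphere 0 1) := (isCompact_sphere 0 1).inter_left hK
    obtain ⟨ε, hε, hs⟩ : ∃ ε > 0, ∀ x ∈ (K : Set E) ∩ Metric.sphere 0 1, ε ≤ ‖T x‖ := by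
      rcases ((K : Set E) ∩ Metric.sphere 0 1).eq_empty_or_nonempty with he | hne
      · exact ⟨1, one_pos, by simp [he]⟩
      · obtain ⟨x, hx, hmin⟩ := hc.exists_isMinOn hne hTc.norm.continuousOn
        refine ⟨‖T x‖, norm_pos_iff.2 fun h0 => ?_, fun y hy => hmin hy⟩
        have := hx.2
        simp [hT x hx.1 h0] at this
    refine ⟨ε, hε, fun x hx => ?_⟩
    rcases eq_or_ne x 0 with rfl | hx0
    · simp
    · have hpos : 0 < ‖x‖ := norm_pos_iff.2 hx0
      have := hs (‖x‖⁻¹ • x) ⟨K.smul_mem (by positivity) hx, by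
        simp [norm_smul, hpos.ne']⟩
      rw [map_smul, norm_smul, norm_inv, norm_norm, inv_mul_eq_div, le_div_iff₀ hpos] at this
      exact this
  refine isClosed_of_closure_subset fun y hy => ?_
  obtain ⟨z, hz, hlim⟩ := mem_closure_iff_seq_limit.1 hy
  choose x hxK hxz using hz
  obtain ⟨R, hR⟩ := (Metric.isBounded_range_of_tendsto z hlim).exists_norm_le
  have hx : ∀ k, x k ∈ Metric.closedBall (0 : E) (R / ε) := fun k => by
    rw [mem_closedBall_zero_iff, le_div_iff₀ hε, mul_comm]
    exact (hle _ (hxK k)).trans (hxz k ▸ hR _ ⟨k, rfl⟩)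
  obtain ⟨a, -, φ, hφ, ha⟩ := (isCompact_closedBall (0 : E) (R / ε)).tendsto_subseq hx
  refine ⟨a, hK.mem_of_tendsto ha (.of_forall fun k => hxK _), ?_⟩
  refine tendsto_nhds_unique ((hTc.tendsto a).comp ha) ?_
  simpa only [Function.comp_def, hxz] using hlim.comp hφ.tendsto_atTop

lemma isClosed_setOf_posSemidef {m : ℕ} :
    IsClosed {S : Matrix (Fin m) (Fin m) ℝ | S.PosSemidef} := by
  simp only [posSemidef_iff_dotProduct_mulVec, Set.ofPred_and, Set.ofPred_forall, IsHermitian]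
  refine (isClosed_eq (by fun_prop) continuous_id).inter (isClosed_iInter fun x => ?_)
  exact isClosed_le continuous_const (by fun_prop)

end separation

section step

variable {n m : ℕ} {A : Fin (n + 1) → Matrix (Fin m) (Fin m) ℝ}
  {U : Submodule ℝ (Fin (n + 1) → ℝ)}

lemma mem_specSet_iff (hA : ∀ i, (A i).IsSymm) (x : Fin n → ℝ) :
    x ∈ specSet A ↔ ∀ u, 0 ≤ eval x (affPoly (pencilForm A u u)) := by
  have hH : (pencilEval A x).IsHermitian := by
    simpa [IsHermitian] using (isSymm_pencilEval hA x).eq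
  simp only [specSet, Set.mem_ofPred_eq, posSemidef_iff_dotProduct_mulVec, hH, true_and,
    star_trivial, eval_affPoly_pencilForm]

/-- A linear functional on affine functions that does not vanish on constants is a multiple of
the evaluation at a point. -/
lemma exists_eval_of_functional (φ : (Fin (n + 1) → ℝ) →ₗ[ℝ] ℝ) (h0 : φ (Pi.single 0 1) ≠ 0) :
    ∃ x : Fin n → ℝ, ∀ v, φ v = φ (Pi.single 0 1) * eval x (affPoly v) := by
  refine ⟨fun i => φ (Pi.single i.succ 1) / φ (Pi.single 0 1), fun v => ?_⟩
  conv_lhs => rw [pi_eq_sum_univ' v]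
  simp only [map_sum, map_smul]
  rw [Fin.sum_univ_succ]
  simp only [affPoly, LinearMap.coe_mk, AddHom.coe_mk, map_add, map_sum, map_mul, eval_C, eval_X,
    mul_add, Finset.mul_sum, smul_eq_mul]
  congr 1
  · ring
  · exact Finset.sum_congr rfl fun i _ => by field_simp

attribute [local instance] Matrix.normedAddCommGroup Matrix.normedSpace

lemma mul_vecMulVec_mul_transpose (M : Matrix (Fin m) (Fin m) ℝ) (u : Fin m → ℝ) :
    M * vecMulVec u u * Mᵀ = vecMulVec (M *ᵥ u) (M *ᵥ u) := by
  rw [mul_vecMulVec, vecMulVec_mul, vecMul_transpose]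

lemma posSemidef_vecMulVec_self (u : Fin m → ℝ) : (vecMulVec u u).PosSemidef := by
  simpa using posSemidef_vecMulVec_self_star u

/-- If all certified affine functions lie in `U`, the cone of affine functions that are a
nonnegative constant plus `tr (L S)` modulo `U` is closed, so points outside can be separated. -/
lemma exists_separating_functional (hA : ∀ i, (A i).IsSymm) (h1 : Pi.single 0 1 ∉ U)
    (hU : ∀ ℓ, HasSosCertificate A U ℓ → ℓ ∈ U) (y : Fin (n + 1) → ℝ)
    (hy : ¬ ∃ (S : Matrix (Fin m) (Fin m) ℝ) (c : ℝ), S.PosSemidef ∧ 0 ≤ c ∧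
      y - Pi.single 0 c - pencilTrace A S ∈ U) :
    ∃ φ : (Fin (n + 1) → ℝ) →ₗ[ℝ] ℝ, φ y < 0 ∧ 0 ≤ φ (Pi.single 0 1) ∧
      ∀ u, 0 ≤ φ (pencilForm A u u) := by
  let N : Submodule ℝ (Fin m → ℝ) :=
    { carrier := {u | ∀ v, pencilForm A v u ∈ U}
      add_mem' := fun ha hb v => by
        rw [pencilForm_add_right]
        exact U.add_mem (ha v) (hb v)
      zero_mem' := fun v => by
        have : pencilForm A v 0 = 0 := by ext i; simp [pencilForm]
        exact this ▸ U.zero_mem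
      smul_mem' := fun r a ha v => by
        rw [pencilForm_smul_right]
        exact U.smul_mem r (ha v) }
  obtain ⟨Q, hQ⟩ := N.exists_isCompl
  set M : Matrix (Fin m) (Fin m) ℝ := LinearMap.toMatrix' (Q.projection N hQ.symm) with hM
  have hMv : ∀ u, M *ᵥ u = Q.projection N hQ.symm u := fun u => by
    rw [hM, LinearMap.toMatrix'_mulVec]
  have hMM : ∀ u, M *ᵥ (M *ᵥ u) = M *ᵥ u := fun u => by
    rw [hMv, hMv, Submodule.projection_apply_of_mem_left hQ.symm
      (Submodule.projection_apply_mem hQ.symm u)]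
  have hMN : ∀ u ∈ N, M *ᵥ u = 0 := fun u hu => by
    rw [hMv, (Submodule.projection_apply_eq_zero_iff hQ.symm).2 hu]
  have hsub : ∀ u, u - M *ᵥ u ∈ N := fun u => by
    rw [hMv]
    exact Submodule.sub_projection_mem hQ.symm u
  let K : PointedCone ℝ (ℝ × Matrix (Fin m) (Fin m) ℝ × (Fin (n + 1) → ℝ)) :=
    { carrier := {x | 0 ≤ x.1 ∧ x.2.1.PosSemidef ∧ M * x.2.1 * Mᵀ = x.2.1 ∧ x.2.2 ∈ U}
      add_mem' := fun {a b} ha hb => ⟨add_nonneg ha.1 hb.1, ha.2.1.add hb.2.1, by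
        simp [Matrix.mul_add, Matrix.add_mul, ha.2.2.1, hb.2.2.1], U.add_mem ha.2.2.2 hb.2.2.2⟩
      zero_mem' := ⟨le_rfl, PosSemidef.zero, by simp, U.zero_mem⟩
      smul_mem' := fun r a ha => ⟨mul_nonneg r.2 ha.1, ha.2.1.smul r.2, by
        have := ha.2.2.1
        simp only [Prod.smul_snd, Prod.smul_fst, Matrix.mul_smul, Matrix.smul_mul,
          this], U.smul_mem r.1 ha.2.2.2⟩ }
  have hKc : IsClosed (K : Set (ℝ × Matrix (Fin m) (Fin m) ℝ × (Fin (n + 1) → ℝ))) := by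
    refine (isClosed_le continuous_const continuous_fst).inter
      ((isClosed_setOf_posSemidef.preimage (by fun_prop)).inter
        ((isClosed_eq (by fun_prop) (by fun_prop)).inter
          (U.closed_of_finiteDimensional.preimage (by fun_prop))))
  let T : (ℝ × Matrix (Fin m) (Fin m) ℝ × (Fin (n + 1) → ℝ)) →ₗ[ℝ] (Fin (n + 1) → ℝ) :=
    (LinearMap.single ℝ (fun _ => ℝ) 0).coprod ((pencilTrace A).coprod LinearMap.id)
  have hTa : ∀ c S u, T (c, S, u) = Pi.single 0 c + (pencilTrace A S + u) := fun _ _ _ => rfl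
  have hker : ∀ x ∈ K, T x = 0 → x = 0 := by
    rintro ⟨c, S, w⟩ ⟨hc, hS, hMS, hw⟩ hTx
    rw [hTa] at hTx
    dsimp only at hc hS hMS hw
    obtain ⟨s, u, hSu⟩ := exists_eq_sum_vecMulVec hS
    have htr : pencilTrace A S = ∑ j, pencilForm A (u j) (u j) := by
      simp only [hSu, map_sum, pencilTrace_vecMulVec]
    have hmem : Pi.single 0 c + ∑ j, pencilForm A (u j) (u j) ∈ U := by
      rw [← htr, eq_neg_of_add_eq_zero_left ((add_assoc _ _ _).trans hTx)]
      exact U.neg_mem hw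
    obtain rfl : c = 0 := by
      by_contra hne
      exact h1 (hU _ (hasSosCertificate_single_zero_one (lt_of_le_of_ne hc (Ne.symm hne)) u hmem))
    rw [Pi.single_zero, zero_add] at hmem
    have hN : ∀ j, u j ∈ N := fun j v => hU _ (hasSosCertificate_of_isotropic hA
      (hU _ (hasSosCertificate_summand u hmem j)) v)
    obtain rfl : S = 0 := by
      rw [← hMS, hSu, Matrix.mul_sum, Matrix.sum_mul]
      refine Finset.sum_eq_zero fun j _ => ?_
      rw [mul_vecMulVec_mul_transpose, hMN _ (hN j), vecMulVec_zero]
    obtain rfl : w = 0 := by simpa using hTx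
    rfl
  have hcl := isClosed_image_of_ker_inter_eq_zero K hKc T hker
  let D : ProperCone ℝ (Fin (n + 1) → ℝ) :=
    { toSubmodule := PointedCone.map T K
      isClosed' := by simpa using hcl }
  have hD : ∀ x ∈ K, T x ∈ D := fun x hx => PointedCone.mem_map.2 ⟨x, hx, rfl⟩
  have hyD : y ∉ D := by
    intro h
    obtain ⟨⟨c, S, w⟩, ⟨hc, hS, -, hw⟩, hx⟩ := PointedCone.mem_map.1 h
    refine hy ⟨S, c, hS, hc, ?_⟩
    rw [← hx, hTa]
    convert hw using 1
    abel
  obtain ⟨φ, hφ, hφy⟩ := D.hyperplane_separation_point hyD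
  have hφU : ∀ w ∈ U, φ w = 0 := fun w hw => by
    have hp := hφ _ (hD (0, 0, w) ⟨le_rfl, PosSemidef.zero, by simp, hw⟩)
    have hn := hφ _ (hD (0, 0, -w) ⟨le_rfl, PosSemidef.zero, by simp, U.neg_mem hw⟩)
    simp only [hTa, Pi.single_zero, map_zero, zero_add, map_neg] at hp hn
    linarith
  refine ⟨φ, hφy, ?_, fun u => ?_⟩
  · simpa [hTa] using hφ _ (hD (1, 0, 0) ⟨zero_le_one, PosSemidef.zero, by simp, U.zero_mem⟩)
  · have hp := hφ _ (hD (0, vecMulVec (M *ᵥ u) (M *ᵥ u), 0)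
      ⟨le_rfl, posSemidef_vecMulVec_self _, by
        simp only [mul_vecMulVec_mul_transpose, hMM], U.zero_mem⟩)
    rw [hTa, Pi.single_zero, zero_add, add_zero, pencilTrace_vecMulVec] at hp
    have hdiff : pencilForm A u u =
        pencilForm A u (u - M *ᵥ u) + pencilForm A (M *ᵥ u) (u - M *ᵥ u) +
          pencilForm A (M *ᵥ u) (M *ᵥ u) := by
      rw [add_assoc, ← pencilForm_add_right, sub_add_cancel, pencilForm_comm hA (M *ᵥ u) u,
        ← pencilForm_add_right, sub_add_cancel]
    have hz := hφU _ (U.add_mem (hsub u u) (hsub u (M *ᵥ u)))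
    simp only [ContinuousLinearMap.coe_coe]
    rw [hdiff, map_add, hz, zero_add]
    exact hp

lemma exists_representation_or_certificate (hA : ∀ i, (A i).IsSymm) (h1 : Pi.single 0 1 ∉ U)
    (f : Fin (n + 1) → ℝ) (hf : ∀ x ∈ specSet A, 0 ≤ eval x (affPoly f)) :
    (∃ (S : Matrix (Fin m) (Fin m) ℝ) (c : ℝ), S.PosSemidef ∧ 0 ≤ c ∧
      f - Pi.single 0 c - pencilTrace A S ∈ U) ∨ ∃ ℓ ∉ U, HasSosCertificate A U ℓ := by
  by_contra! h
  obtain ⟨hrep, hcert⟩ := h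
  have hU : ∀ ℓ, HasSosCertificate A U ℓ → ℓ ∈ U := fun ℓ h => by
    by_contra hn
    exact hcert ℓ hn h
  obtain ⟨φ, hφf, hφ1, hφ⟩ := exists_separating_functional hA h1 hU f
    fun ⟨S, c, hS, hc, h⟩ => hrep S c hS hc h
  obtain ⟨ψ, hψ1, -, hψ⟩ := exists_separating_functional hA h1 hU (-Pi.single 0 1) <| by
    rintro ⟨S, c, hS, hc, h⟩
    obtain ⟨s, u, rfl⟩ := exists_eq_sum_vecMulVec hS
    refine h1 (hU _ (hasSosCertificate_single_zero_one (c := 1 + c) (by positivity) u ?_))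
    convert U.neg_mem h using 1
    simp only [map_sum, pencilTrace_vecMulVec, Pi.single_add]
    abel
  rw [map_neg, neg_lt_zero] at hψ1
  set ε := -φ f / (2 * (|ψ f| + 1)) with hε
  have hεpos : 0 < ε := div_pos (by linarith) (by positivity)
  have hneg : φ f + ε * ψ f < 0 := by
    have h2 : ε * (2 * (|ψ f| + 1)) = -φ f := div_mul_cancel₀ _ (by positivity)
    nlinarith [le_abs_self (ψ f), abs_nonneg (ψ f)]
  have hpos : 0 < (φ + ε • ψ) (Pi.single 0 1) := by
    simp only [LinearMap.add_apply, LinearMap.smul_apply, smul_eq_mul]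
    positivity
  obtain ⟨x, hx⟩ := exists_eval_of_functional (φ + ε • ψ) hpos.ne'
  have hxS : x ∈ specSet A := (mem_specSet_iff hA x).2 fun u => by
    refine nonneg_of_mul_nonneg_right ?_ hpos
    rw [← hx]
    exact add_nonneg (hφ u) (mul_nonneg hεpos.le (hψ u))
  have := mul_nonneg hpos.le (hf x hxS)
  rw [← hx] at this
  exact hneg.not_ge this

/-- When `U` is a hyperplane, its common zero set is a point. -/
lemma exists_representation_of_finrank (hA : ∀ i, (A i).IsSymm) (h1 : Pi.single 0 1 ∉ U)
    (hn : n ≤ Module.finrank ℝ U) (f : Fin (n + 1) → ℝ)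
    (hf : ∀ x ∈ specSet A, 0 ≤ eval x (affPoly f)) :
    ∃ (S : Matrix (Fin m) (Fin m) ℝ) (c : ℝ), S.PosSemidef ∧ 0 ≤ c ∧
      f - Pi.single 0 c - pencilTrace A S ∈ U := by
  obtain ⟨φ, hφ1, hφU⟩ := Submodule.exists_le_ker_of_notMem h1
  have hker : U = LinearMap.ker φ := by
    refine Submodule.eq_of_le_of_finrank_le hφU ?_
    have hlt : Module.finrank ℝ (LinearMap.ker φ) < Module.finrank ℝ (Fin (n + 1) → ℝ) :=
      Submodule.finrank_lt fun h => hφ1 (LinearMap.mem_ker.1 (h ▸ Submodule.mem_top))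
    rw [Module.finrank_fin_fun] at hlt
    omega
  obtain ⟨x, hx⟩ := exists_eval_of_functional φ hφ1
  have hmem : ∀ v, v ∈ U ↔ eval x (affPoly v) = 0 := fun v => by
    rw [hker, LinearMap.mem_ker, hx, mul_eq_zero, or_iff_right hφ1]
  simp only [hmem, map_sub, affPoly_single_zero, eval_C]
  rcases le_or_gt 0 (eval x (affPoly f)) with h | h
  · exact ⟨0, _, PosSemidef.zero, h, by simp⟩
  · have hxS : x ∉ specSet A := fun hxS => h.not_ge (hf x hxS)
    rw [mem_specSet_iff hA] at hxS
    push Not at hxS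
    obtain ⟨u, hu⟩ := hxS
    refine ⟨(eval x (affPoly f) / eval x (affPoly (pencilForm A u u))) • vecMulVec u u, 0,
      (posSemidef_vecMulVec_self u).smul (div_nonneg_of_nonpos h.le hu.le), le_rfl, ?_⟩
    rw [map_smul, pencilTrace_vecMulVec, map_smul, smul_eval, div_mul_cancel₀ _ hu.ne]
    ring

end step

section chain

variable {n m : ℕ} {A : Fin (n + 1) → Matrix (Fin m) (Fin m) ℝ}

lemma span_affPoly_image_span_le {ι : Type*} {ℓ : ι → Fin (n + 1) → ℝ}
    {I : Ideal (MvPolynomial (Fin n) ℝ)} (h : ∀ j, affPoly (ℓ j) ∈ I) :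
    Ideal.span (affPoly '' (Submodule.span ℝ (Set.range ℓ) : Set (Fin (n + 1) → ℝ))) ≤ I := by
  rw [Ideal.span_le]
  rintro _ ⟨v, hv, rfl⟩
  have hle : Submodule.span ℝ (Set.range ℓ) ≤ (I.restrictScalars ℝ).comap affPoly := by
    rw [Submodule.span_le]
    rintro _ ⟨j, rfl⟩
    exact h j
  exact hle hv

lemma mem_of_single_zero_mem {U : Submodule ℝ (Fin (n + 1) → ℝ)}
    {I : Ideal (MvPolynomial (Fin n) ℝ)}
    (hUI : Ideal.span (affPoly '' (U : Set (Fin (n + 1) → ℝ))) ≤ I) (h1 : Pi.single 0 1 ∈ U)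
    (p : MvPolynomial (Fin n) ℝ) : p ∈ I := by
  have hone := hUI (affPoly_mem_span h1)
  rw [affPoly_single_zero, C_1] at hone
  rw [(Ideal.eq_top_iff_one _).2 hone]
  exact Submodule.mem_top

lemma isSosMatrix_zero : IsSosMatrix (0 : Matrix (Fin m) (Fin m) (MvPolynomial (Fin n) ℝ)) :=
  ⟨0, 0, by simp⟩

/-- A chain of certified affine functions which either represents `f` already or has length `k`
and spans a space of dimension at least `k`. -/
lemma exists_certificate_chain (hA : ∀ i, (A i).IsSymm) (f : Fin (n + 1) → ℝ)
    (hf : ∀ x ∈ specSet A, 0 ≤ eval x (affPoly f)) (k : ℕ) (hk : k ≤ n) :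
    ∃ (ℓ : Fin n → Fin (n + 1) → ℝ) (S : Fin n → Matrix (Fin m) (Fin m) (MvPolynomial (Fin n) ℝ)),
      (∀ i, IsSosMatrix (S i)) ∧ (∀ i a b, (S i a b).totalDegree ≤ 2) ∧
      (∀ i, affPoly (ℓ i) ^ 2 + (pencilPoly A * S i).trace ∈
        Ideal.span ((fun j => affPoly (ℓ j)) '' {j | j < i})) ∧
      ((∃ (S₀ : Matrix (Fin m) (Fin m) ℝ) (c : ℝ), S₀.PosSemidef ∧ 0 ≤ c ∧
        affPoly f - C c - (pencilPoly A * S₀.map C).trace ∈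
          Ideal.span (Set.range fun j => affPoly (ℓ j))) ∨
      ((∀ i : Fin n, k ≤ i → ℓ i = 0) ∧
        k ≤ Module.finrank ℝ (Submodule.span ℝ (Set.range ℓ)))) := by
  induction k with
  | zero =>
    exact ⟨0, 0, fun _ => isSosMatrix_zero, by simp, by simp, .inr ⟨by simp, by simp⟩⟩
  | succ k ih =>
    obtain ⟨ℓ, S, hS, hdeg, hmem, hrep | ⟨hzero, hrank⟩⟩ := ih (by omega)
    · exact ⟨ℓ, S, hS, hdeg, hmem, .inl hrep⟩
    set U := Submodule.span ℝ (Set.range ℓ) with hUdef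
    have hUI : Ideal.span (affPoly '' (U : Set (Fin (n + 1) → ℝ))) ≤
        Ideal.span (Set.range fun j => affPoly (ℓ j)) :=
      span_affPoly_image_span_le fun j => Ideal.subset_span ⟨j, rfl⟩
    by_cases h1 : Pi.single 0 1 ∈ U
    · refine ⟨ℓ, S, hS, hdeg, hmem, .inl ⟨0, 0, PosSemidef.zero, le_rfl,
        mem_of_single_zero_mem hUI h1 _⟩⟩
    rcases exists_representation_or_certificate hA h1 f hf with
      ⟨S₀, c, hS₀, hc, h⟩ | ⟨ℓ', hℓ', S', hS', hdeg', hmem'⟩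
    · refine ⟨ℓ, S, hS, hdeg, hmem, .inl ⟨S₀, c, hS₀, hc, hUI ?_⟩⟩
      simpa only [map_sub, affPoly_single_zero, affPoly_pencilTrace] using affPoly_mem_span h
    let k' : Fin n := ⟨k, hk⟩
    have hℓk : ℓ k' = 0 := hzero k' le_rfl
    have hold : ∀ j, j ≠ k' → Function.update ℓ k' ℓ' j = ℓ j := fun j hj =>
      Function.update_of_ne hj _ _
    refine ⟨Function.update ℓ k' ℓ', Function.update S k' S', fun i => ?_, fun i => ?_, fun i => ?_,
      .inr ⟨fun i hi => ?_, ?_⟩⟩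
    · rcases eq_or_ne i k' with rfl | hi
      · simpa using hS'
      · simpa [hi] using hS i
    · rcases eq_or_ne i k' with rfl | hi
      · simpa using hdeg'
      · simpa [hi] using hdeg i
    · have hsub : ∀ j < i, affPoly (ℓ j) ∈
          Ideal.span ((fun j => affPoly (Function.update ℓ k' ℓ' j)) '' {j | j < i}) := by
        intro j hj
        rcases eq_or_ne j k' with rfl | hjk
        · simp [hℓk]
        · exact Ideal.subset_span ⟨j, hj, by simp only [hold j hjk]⟩
      rcases eq_or_ne i k' with rfl | hi
      · rw [Function.update_self, Function.update_self]
        refine span_affPoly_image_span_le (fun j => ?_) hmem'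
        rcases lt_or_ge j k' with hj | hj
        · exact hsub j hj
        · simp [hzero j hj]
      · rw [hold i hi, Function.update_of_ne hi]
        refine Ideal.span_le.2 ?_ (hmem i)
        rintro _ ⟨j, hj, rfl⟩
        exact hsub j hj
    · have hik : i ≠ k' := by
        rintro rfl
        simp [k'] at hi
      rw [hold i hik, hzero i (by omega)]
    · refine lt_of_le_of_lt hrank (Submodule.finrank_lt_finrank_of_lt ?_)
      refine lt_of_le_of_ne (Submodule.span_le.2 ?_) fun h => hℓ' ?_
      · rintro _ ⟨j, rfl⟩
        rcases eq_or_ne j k' with rfl | hjk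
        · simp [hℓk]
        · exact Submodule.subset_span ⟨j, hold j hjk⟩
      · rw [h]
        exact Submodule.subset_span ⟨k', Function.update_self _ _ _⟩

lemma eval_trace_nonneg {x : Fin n → ℝ} (hx : x ∈ specSet A)
    {S : Matrix (Fin m) (Fin m) (MvPolynomial (Fin n) ℝ)} (hS : IsSosMatrix S) :
    0 ≤ eval x (pencilPoly A * S).trace := by
  obtain ⟨s, P, rfl⟩ := hS
  have h := trace_pencilPoly_mul_transpose_mul_self (A := A) fun j a => P j a
  rw [show (of fun j a => P j a) = P from rfl] at h
  rw [h, map_sum]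
  refine Finset.sum_nonneg fun j _ => ?_
  have := PosSemidef.dotProduct_mulVec_nonneg hx fun a => eval x (P j a)
  rw [← eval_pencilPoly] at this
  simpa [dotProduct, mulVec] using this

lemma isSosMatrix_map_C {S : Matrix (Fin m) (Fin m) ℝ} (hS : S.PosSemidef) :
    IsSosMatrix (S.map C : Matrix (Fin m) (Fin m) (MvPolynomial (Fin n) ℝ)) := by
  obtain ⟨s, v, rfl⟩ := exists_eq_sum_vecMulVec hS
  refine ⟨s, of fun j => C ∘ v j, ?_⟩
  ext a b
  simp [mul_apply, Matrix.sum_apply, vecMulVec_apply]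

lemma eval_eq_zero_of_mem_span {s : Set (MvPolynomial (Fin n) ℝ)} {x : Fin n → ℝ}
    (hs : ∀ p ∈ s, eval x p = 0) {p : MvPolynomial (Fin n) ℝ} (hp : p ∈ Ideal.span s) :
    eval x p = 0 :=
  (Ideal.span_le (I := RingHom.ker (eval x))).2 hs hp

end chain

/-- **Positivstellensatz for linear polynomials on spectrahedra.** A linear polynomial `f` is
nonnegative on `S_L` iff there are linear polynomials `ℓ₁, …, ℓₙ`, quadratic sos-matrices
`S₁, …, Sₙ`, a positive semidefinite constant matrix `S` and `c ≥ 0` such that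
`ℓᵢ² + tr(L Sᵢ) ∈ (ℓ₁, …, ℓ_{i-1})` for each `i` and `f - c - tr(L S) ∈ (ℓ₁, …, ℓₙ)`. -/
theorem linear_positivstellensatz_on_spectrahedra
    (n m : ℕ) (A : Fin (n+1) → Matrix (Fin m) (Fin m) ℝ)
    (hsymm : ∀ i, (A i).IsSymm)
    (f : MvPolynomial (Fin n) ℝ) (hf : f.totalDegree ≤ 1) :
    (∀ x ∈ specSet A, 0 ≤ MvPolynomial.eval x f) ↔
      ∃ (ℓ : Fin n → MvPolynomial (Fin n) ℝ)
        (S : Fin n → Matrix (Fin m) (Fin m) (MvPolynomial (Fin n) ℝ))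
        (S₀ : Matrix (Fin m) (Fin m) ℝ) (c : ℝ),
        (∀ i, (ℓ i).totalDegree ≤ 1) ∧
        (∀ i, IsSosMatrix (S i)) ∧ (∀ i a b, (S i a b).totalDegree ≤ 2) ∧
        S₀.PosSemidef ∧ 0 ≤ c ∧
        (∀ i : Fin n, (ℓ i)^2 + (pencilPoly A * S i).trace ∈
          Ideal.span (ℓ '' {j : Fin n | j < i})) ∧
        f - MvPolynomial.C c - (pencilPoly A * S₀.map MvPolynomial.C).trace ∈
          Ideal.span (Set.range ℓ) := by
  constructor
  · intro h
    obtain ⟨v, rfl⟩ := exists_affPoly_eq f hf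
    obtain ⟨ℓ, S, hS, hdeg, hmem, hrep⟩ := exists_certificate_chain hsymm v h n le_rfl
    have hfin : ∃ (S₀ : Matrix (Fin m) (Fin m) ℝ) (c : ℝ), S₀.PosSemidef ∧ 0 ≤ c ∧
        affPoly v - C c - (pencilPoly A * S₀.map C).trace ∈
          Ideal.span (Set.range fun j => affPoly (ℓ j)) := by
      rcases hrep with hrep | ⟨-, hrank⟩
      · exact hrep
      have hUI := span_affPoly_image_span_le (ℓ := ℓ)
        (I := Ideal.span (Set.range fun j => affPoly (ℓ j))) fun j => Ideal.subset_span ⟨j, rfl⟩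
      by_cases h1 : Pi.single 0 1 ∈ Submodule.span ℝ (Set.range ℓ)
      · refine ⟨0, 0, PosSemidef.zero, le_rfl, mem_of_single_zero_mem hUI h1 _⟩
      · obtain ⟨S₀, c, hS₀, hc, h⟩ := exists_representation_of_finrank hsymm h1 hrank v h
        refine ⟨S₀, c, hS₀, hc, hUI ?_⟩
        simpa only [map_sub, affPoly_single_zero, affPoly_pencilTrace] using affPoly_mem_span h
    obtain ⟨S₀, c, hS₀, hc, h⟩ := hfin
    exact ⟨fun j => affPoly (ℓ j), S, S₀, c, fun i => totalDegree_affPoly_le _, hS, hdeg, hS₀, hc,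
      hmem, h⟩
  · rintro ⟨ℓ, S, S₀, c, -, hS, -, hS₀, hc, hmem, h⟩ x hx
    have hzero : ∀ i, eval x (ℓ i) = 0 := by
      intro i
      induction i using WellFoundedLT.induction with
      | ind i ih =>
        have h0 := eval_eq_zero_of_mem_span (x := x) (by rintro _ ⟨j, hj, rfl⟩; exact ih j hj)
          (hmem i)
        rw [map_add, map_pow] at h0
        have := eval_trace_nonneg hx (hS i)
        exact pow_eq_zero_iff two_ne_zero |>.1 (by nlinarith [sq_nonneg (eval x (ℓ i))])
    have h0 := eval_eq_zero_of_mem_span (x := x) (by rintro _ ⟨j, rfl⟩; exact hzero j) h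
    rw [map_sub, map_sub, eval_C] at h0
    linarith [eval_trace_nonneg hx (isSosMatrix_map_C hS₀)]
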